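/- Let d ∈ 𝔉 be any bounded function. Then the class ℬ_d equals the class of automatic groups: every group in ℬ_d is automatic. In particular, if for some f ∈ 𝔉 the class ℬ_f contains a non-automatic group, then f is unbounded. -/

import Mathlib

namespace CAG

/-- The convolution `w₁ ⊗ w₂` of two words, over the padded alphabet
`(Σ ∪ {⋄})²`, modelled as `Option α × Option α` where `none` is the padding symbol `⋄`. -/
def conv {α : Type*} : List α → List α → List (Option α × Option α)
  | [], [] => []
  | a :: as, [] => (some a, none) :: conv as []
  | [], b :: bs => (none, some b) :: conv [] bs
  | a :: as, b :: bs => (some a, some b) :: conv as bs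

/-- A binary relation on words is regular if the language of convolutions of its pairs
is a regular language. -/
def IsRegularRel {α : Type*} (R : Set (List α × List α)) : Prop :=
  Language.IsRegular {w | ∃ p ∈ R, w = conv p.1 p.2}

variable {G : Type*} [Group G]

/-- The alphabet `S = A ∪ A⁻¹` associated to a generating set `A ⊆ G`. -/
def Alph (A : Set G) : Type _ := {x : G // x ∈ A ∪ A⁻¹}

/-- The canonical evaluation map `π : S* → G`. -/
def eval (A : Set G) (w : List (Alph A)) : G := (w.map Subtype.val).prod

/-- The word length `d_A(g)` of `g` with respect to the generating set `A`. -/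
noncomputable def wordLength (A : Set G) (g : G) : ℕ :=
  sInf {n | ∃ w : List (Alph A), eval A w = g ∧ w.length = n}

/-- The distance `d_A(g₁, g₂)` in the Cayley graph of `G` with respect to `A`. -/
noncomputable def cayleyDist (A : Set G) (g₁ g₂ : G) : ℕ := wordLength A (g₁⁻¹ * g₂)

/-- `ψ : L → G` is a Cayley automatic representation of `G` (w.r.t. the
generating set `A`): `L ⊆ S*` is regular, `ψ` is a bijection from `L` onto `G`, and for every
`a ∈ A` the relation `R_a = {(ψ⁻¹(g), ψ⁻¹(g·a)) : g ∈ G}` is regular. -/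
def IsCayleyAutomaticRep (A : Set G) (L : Language (Alph A)) (ψ : List (Alph A) → G) : Prop :=
  Language.IsRegular L ∧ Set.BijOn ψ L Set.univ ∧
    ∀ a ∈ A, IsRegularRel {p : List (Alph A) × List (Alph A) |
      p.1 ∈ L ∧ p.2 ∈ L ∧ ψ p.2 = ψ p.1 * a}

/-- `G` is Cayley automatic with respect to the generating set `A`. -/
def IsCayleyAutomatic (A : Set G) : Prop :=
  ∃ (L : Language (Alph A)) (ψ : List (Alph A) → G), IsCayleyAutomaticRep A L ψ

/-- `G` is automatic (in the sense of Thurston) with respect to the generating set `A`: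
there is a regular language `L ⊆ S*` on which the canonical evaluation map `π` is a bijection
onto `G` and all the relations `R_a`, `a ∈ A`, are regular. -/
def IsAutomatic (A : Set G) : Prop :=
  ∃ L : Language (Alph A), IsCayleyAutomaticRep A L (eval A)

/-- The family `𝔉` of non-decreasing, non-negative real valued functions defined on a
final segment `[Q, ∞)` of `ℕ` (values below `Q` are irrelevant junk values). -/
structure FFun where
  Q : ℕ
  toFun : ℕ → ℝ
  nonneg : ∀ n, Q ≤ n → 0 ≤ toFun n
  mono : ∀ m n, Q ≤ m → m ≤ n → toFun m ≤ toFun n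

/-- `h ⪯ f` : there are positive integers `K, M, N`, with `[N,∞)` contained in the domains of
`h` and `f`, such that `h(n) ≤ K·f(M·n)` for all `n ≥ N`. -/
def FFun.Preceq (h f : FFun) : Prop :=
  ∃ K M N : ℕ, 0 < K ∧ 0 < M ∧ 0 < N ∧ h.Q ≤ N ∧ f.Q ≤ N ∧
    ∀ n, N ≤ n → h.toFun n ≤ K * f.toFun (M * n)

/-- `h ≍ f` iff `h ⪯ f` and `f ⪯ h`. -/
def FFun.Equiv (h f : FFun) : Prop := h.Preceq f ∧ f.Preceq h

/-- `h ≺ f` iff `h ⪯ f` and not `h ≍ f`. -/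
def FFun.Prec (h f : FFun) : Prop := h.Preceq f ∧ ¬ h.Equiv f

/-- `G ∈ ℬ_f` with respect to the generating set `A`: there is a Cayley automatic
representation `ψ : L → G` such that the function
`h(n) = max{d_A(π(w), ψ(w)) : w ∈ L, |w| ≤ n}` satisfies `h ⪯ f`
(stated equivalently: for some positive `K, M, N` with `N ≥ Q_f`, every `w ∈ L` with `|w| ≤ n`
and `n ≥ N` satisfies `d_A(π(w), ψ(w)) ≤ K·f(M·n)`). -/
def InB (A : Set G) (f : FFun) : Prop :=
  ∃ (L : Language (Alph A)) (ψ : List (Alph A) → G),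
    IsCayleyAutomaticRep A L ψ ∧
    ∃ K M N : ℕ, 0 < K ∧ 0 < M ∧ 0 < N ∧ f.Q ≤ N ∧
      ∀ n, N ≤ n → ∀ w ∈ L, w.length ≤ n →
        (cayleyDist A (eval A w) (ψ w) : ℝ) ≤ K * f.toFun (M * n)

/-- The identity function `𝔦(n) = n` as an element of `𝔉`. -/
def identF : FFun where
  Q := 1
  toFun n := n
  nonneg n _ := by positivity
  mono m n _ h := by simpa using (Nat.cast_le (α := ℝ)).mpr h

/-- The exponential function `𝔢(n) = exp n` as an element of `𝔉`. -/
noncomputable def expF : FFun where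
  Q := 1
  toFun n := Real.exp n
  nonneg n _ := (Real.exp_pos n).le
  mono m n _ h := Real.exp_le_exp.mpr (by exact_mod_cast h)

end CAG

/-!
Let `ψ : L → G` be a Cayley automatic representation for which the defects `π(w)⁻¹ ψ(w)`, `w ∈ L`,
have bounded word length and hence form a finite set `B`. The defect is then a finite-state function
of `w`. Indeed, extend every prefix `u` of a word of `L` to a word of `L` by a suffix that depends
only on the left quotient of `L` by `u`, and let the defect of `u` be `π(u)⁻¹` times the image under
`ψ` of this word; it still takes only finitely many values. The extensions of `u` and `ua` agree
along `u`, so the relations `R_g`, which are regular for all `g ∈ G` and of which only finitely many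
can occur, detect how their images under `ψ` differ. Hence the defect of `ua` can be updated from
that of `u`, and `L_b = {w ∈ L | π(w)⁻¹ ψ(w) = b}` is regular for every `b`. Appending to the words
of `L_b`, `b ∈ B`, a fixed word that evaluates to `b` is a regular map from `L` onto a language on
which `π` is bijective, and conjugating the relations `R_a` by it shows that `G` is automatic.

Regularity is best used in Myhill–Nerode form: a language is regular if and only if it has finitely
many left quotients.
-/

namespace CAG

section RegularLanguages

variable {α β : Type*} {L M : Language α}

lemma isRegular_of_append_mem_iff {X : Type*} {F : List α → X} (hF : (Set.range F).Finite)
    (g : X → Language α) (h : ∀ w s, w ++ s ∈ L ↔ s ∈ g (F w)) : L.IsRegular := by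
  have hg : L.leftQuotient = g ∘ F := funext fun w ↦ Language.ext (h w)
  refine .of_finite_range_leftQuotient ?_
  rw [hg, Set.range_comp]
  exact hF.image g

lemma isRegular_of_rightInvariant {X : Type*} {F : List α → X} (hF : (Set.range F).Finite)
    (hstep : ∀ u v a, F u = F v → F (u ++ [a]) = F (v ++ [a]))
    (hmem : ∀ u v, F u = F v → u ∈ L → v ∈ L) : L.IsRegular := by
  have hext : ∀ s u v, F u = F v → F (u ++ s) = F (v ++ s) := by
    intro s
    induction s with
    | nil => simp
    | cons a s ih => intro u v h; simpa using ih _ _ (hstep u v a h)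
  have hfactors : L.leftQuotient.FactorsThrough F := fun u v h ↦ Language.ext fun s ↦
    ⟨hmem _ _ (hext s u v h), hmem _ _ (hext s v u h.symm)⟩
  obtain ⟨g, hg⟩ := (Function.factorsThrough_iff _).1 hfactors
  exact isRegular_of_append_mem_iff hF g fun w s ↦ by
    rw [← Language.mem_leftQuotient, hg, Function.comp_apply]

lemma isRegular_of_leftQuotient_mem {S : Set (Language α)} (hS : S.Finite) (hL : L ∈ S)
    (h : ∀ K ∈ S, ∀ a, K.leftQuotient [a] ∈ S) : L.IsRegular := by
  refine .of_finite_range_leftQuotient (hS.subset (Set.range_subset_iff.2 fun w ↦ ?_))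
  induction w using List.reverseRecOn with
  | nil => exact hL
  | append_singleton w a ih => rw [Language.leftQuotient_append]; exact h _ ih a

lemma isRegular_preimage {φ : List α → List β} (hφ : ∀ u v, φ (u ++ v) = φ u ++ φ v)
    {K : Language β} (hK : K.IsRegular) :
    Language.IsRegular ({w | φ w ∈ K} : Language α) := by
  refine isRegular_of_append_mem_iff (F := K.leftQuotient ∘ φ)
    (hK.finite_range_leftQuotient.subset (Set.range_comp_subset_range _ _))
    (fun Q ↦ {s | φ s ∈ Q}) fun w s ↦ ?_
  change φ (w ++ s) ∈ K ↔ φ w ++ φ s ∈ K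
  rw [hφ]

lemma isRegular_filterMap (hL : L.IsRegular) (f : α → Option β) :
    Language.IsRegular ({v | ∃ w ∈ L, w.filterMap f = v} : Language β) := by
  refine isRegular_of_append_mem_iff (F := fun v ↦ L.leftQuotient '' {u | u.filterMap f = v})
    (hL.finite_range_leftQuotient.powerset.subset <|
      Set.range_subset_iff.2 fun v ↦ Set.image_subset_range _ _)
    (fun S ↦ {s | ∃ Q ∈ S, ∃ t ∈ Q, t.filterMap f = s}) fun v s ↦ ?_
  change (∃ w ∈ L, w.filterMap f = v ++ s) ↔
    ∃ Q ∈ L.leftQuotient '' {u | u.filterMap f = v}, ∃ t ∈ Q, t.filterMap f = s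
  simp only [List.filterMap_eq_append_iff, Set.exists_mem_image, Language.mem_leftQuotient]
  constructor
  · rintro ⟨_, hw, u, t, rfl, hu, ht⟩
    exact ⟨u, hu, t, hw, ht⟩
  · rintro ⟨u, hu, t, hw, ht⟩
    exact ⟨_, hw, u, t, rfl, hu, ht⟩

lemma isRegular_mul (hL : L.IsRegular) (hM : M.IsRegular) : (L * M).IsRegular := by
  refine isRegular_of_append_mem_iff
    (F := fun w ↦ (L.leftQuotient w, M.leftQuotient '' {v | ∃ u ∈ L, u ++ v = w}))
    ((hL.finite_range_leftQuotient.prod hM.finite_range_leftQuotient.powerset).subset <|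
      Set.range_subset_iff.2 fun w ↦ ⟨⟨w, rfl⟩, Set.image_subset_range _ _⟩)
    (fun P ↦ {s | s ∈ P.1 * M ∨ ∃ Q ∈ P.2, s ∈ Q}) fun w s ↦ ?_
  change w ++ s ∈ L * M ↔ s ∈ L.leftQuotient w * M ∨
    ∃ Q ∈ M.leftQuotient '' {v | ∃ u ∈ L, u ++ v = w}, s ∈ Q
  simp only [Language.mem_mul, List.append_eq_append_iff, Set.exists_mem_image,
    Language.mem_leftQuotient]
  constructor
  · rintro ⟨u, hu, v, hv, ⟨t, rfl, rfl⟩ | ⟨t, rfl, rfl⟩⟩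
    · exact .inr ⟨t, ⟨u, hu, rfl⟩, hv⟩
    · exact .inl ⟨t, hu, v, hv, rfl⟩
  · rintro (⟨t, ht, v, hv, rfl⟩ | ⟨v, ⟨u, hu, rfl⟩, hv⟩)
    · exact ⟨_, ht, v, hv, .inr ⟨t, rfl, rfl⟩⟩
    · exact ⟨u, hu, _, hv, .inl ⟨v, rfl, rfl⟩⟩

lemma isRegular_of_finite (hL : Set.Finite (L : Set (List α))) : L.IsRegular := by
  have hsuffixes : Set.Finite (⋃ w ∈ L, {v | v ∈ w.tails}) :=
    hL.biUnion fun w _ ↦ w.tails.finite_toSet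
  refine .of_finite_range_leftQuotient <|
    hsuffixes.powerset.subset (Set.range_subset_iff.2 fun u v (hv : u ++ v ∈ L) ↦ ?_)
  exact Set.mem_biUnion hv ((List.mem_tails _ _).2 (List.suffix_append u v))

lemma isRegular_biUnion {ι : Type*} {s : Set ι} (hs : s.Finite) {K : ι → Language α}
    (hK : ∀ i ∈ s, (K i).IsRegular) :
    Language.IsRegular ({w | ∃ i ∈ s, w ∈ K i} : Language α) := by
  induction s, hs using Set.Finite.induction_on with
  | empty => exact isRegular_of_finite (by simp)
  | @insert i s _ _ ih =>
    rw [Set.forall_mem_insert] at hK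
    have hinsert : ({w | ∃ j ∈ insert i s, w ∈ K j} : Language α) =
        K i + (show Language α from {w | ∃ j ∈ s, w ∈ K j}) :=
      Language.ext fun w ↦ Set.exists_mem_insert
    rw [hinsert]
    exact hK.1.add (ih hK.2)

end RegularLanguages

section Convolution

variable {α γ : Type*} {R S : SetRel (List α) (List α)} {x y : List α}

/-- The language of convolutions of the pairs of a binary relation on words; the relation is
regular if and only if this language is. -/
def convLanguage (R : SetRel (List α) (List α)) : Language (Option α × Option α) :=
  {w | ∃ p ∈ R, w = conv p.1 p.2}

lemma filterMap_fst_conv (x y : List α) : (conv x y).filterMap Prod.fst = x := by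
  induction x, y using conv.induct with
  | case1 => simp [conv]
  | case2 _ _ ih | case3 _ _ ih | case4 _ _ _ _ ih => rw [conv, List.filterMap_cons, ih]

lemma filterMap_snd_conv (x y : List α) : (conv x y).filterMap Prod.snd = y := by
  induction x, y using conv.induct with
  | case1 => simp [conv]
  | case2 _ _ ih | case3 _ _ ih | case4 _ _ _ _ ih => rw [conv, List.filterMap_cons, ih]

lemma map_swap_conv (x y : List α) : (conv x y).map Prod.swap = conv y x := by
  induction x, y using conv.induct <;> simp_all [conv]

lemma conv_append_append (w x y : List α) :
    conv (w ++ x) (w ++ y) = w.map (fun a ↦ (some a, some a)) ++ conv x y := by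
  induction w with
  | nil => rfl
  | cons a w ih => simp [conv, ih]

lemma conv_mem_convLanguage : conv x y ∈ convLanguage R ↔ (x, y) ∈ R := by
  refine ⟨fun ⟨p, hp, h⟩ ↦ ?_, fun h ↦ ⟨(x, y), h, rfl⟩⟩
  have hfst := congrArg (List.filterMap Prod.fst) h
  have hsnd := congrArg (List.filterMap Prod.snd) h
  rw [filterMap_fst_conv, filterMap_fst_conv] at hfst
  rw [filterMap_snd_conv, filterMap_snd_conv] at hsnd
  rwa [hfst, hsnd]

/-- The two tracks of a multi-track word selected by `f`, with the columns in which both are blank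
erased. A relation on words can thus be read off from words over any number of tracks, without
keeping track of where the padding sits. -/
def tracks (f : γ → Option α × Option α) (t : List γ) : List (Option α × Option α) :=
  (t.map f).filter fun p ↦ p.1.isSome || p.2.isSome

lemma filterMap_fst_tracks (f : γ → Option α × Option α) (t : List γ) :
    (tracks f t).filterMap Prod.fst = t.filterMap fun c ↦ (f c).1 := by
  rw [tracks, List.filterMap_filter, List.filterMap_map]
  congr! 2 with c
  rcases h : f c with ⟨_ | a, _ | b⟩ <;> simp [h]

lemma filterMap_snd_tracks (f : γ → Option α × Option α) (t : List γ) :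
    (tracks f t).filterMap Prod.snd = t.filterMap fun c ↦ (f c).2 := by
  rw [tracks, List.filterMap_filter, List.filterMap_map]
  congr! 2 with c
  rcases h : f c with ⟨_ | a, _ | b⟩ <;> simp [h]

lemma filterMap_of_tracks_eq_conv {f : γ → Option α × Option α} {t : List γ}
    (h : tracks f t = conv x y) :
    (t.filterMap fun c ↦ (f c).1) = x ∧ (t.filterMap fun c ↦ (f c).2) = y := by
  rw [← filterMap_fst_tracks, ← filterMap_snd_tracks, h]
  exact ⟨filterMap_fst_conv x y, filterMap_snd_conv x y⟩

lemma tracks_range_eq_conv {n : ℕ} (hx : x.length ≤ n) (hy : y.length ≤ n) :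
    tracks (fun i ↦ (x[i]?, y[i]?)) (List.range n) = conv x y := by
  induction n generalizing x y with
  | zero =>
    obtain rfl := List.length_eq_zero_iff.1 (Nat.le_zero.1 hx)
    obtain rfl := List.length_eq_zero_iff.1 (Nat.le_zero.1 hy)
    simp [tracks, conv]
  | succ n ih =>
    have htail := ih (x := x.tail) (y := y.tail) (by simpa using hx) (by simpa using hy)
    rw [tracks] at htail ⊢
    rw [List.range_succ_eq_map, List.map_cons, List.map_map, List.filter_cons]
    cases x <;> cases y <;> simp_all [conv, Function.comp_def]

lemma isRegular_tracks (f : γ → Option α × Option α) {K : Language γ} (hK : K.IsRegular) :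
    Language.IsRegular ({w | ∃ t ∈ K, tracks f t = w} : Language (Option α × Option α)) := by
  simpa only [tracks, ← List.filterMap_eq_map, List.filter_filterMap]
    using isRegular_filterMap hK _

lemma isRegular_tracks_mem (f : γ → Option α × Option α) (hR : IsRegularRel R) :
    Language.IsRegular ({t | tracks f t ∈ convLanguage R} : Language γ) :=
  isRegular_preimage (fun _ _ ↦ by simp [tracks]) hR

lemma conv_eq_cons_iff {c : Option α × Option α} {w : List (Option α × Option α)} :
    conv x y = c :: w ↔
      c ≠ (none, none) ∧ (x.head?, y.head?) = c ∧ conv x.tail y.tail = w := by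
  cases x <;> cases y <;> simp [conv] <;> grind

/-
A letter with a blank component forces the rest of that component to be blank. Hence the left
quotients of the language of all convolutions arise by requiring some of the components to be empty.
-/
lemma isRegularRel_univ : IsRegularRel (Set.univ : SetRel (List α) (List α)) := by
  let V : Prop × Prop → Language (Option α × Option α) := fun P ↦
    {w | ∃ x y, (P.1 → x = []) ∧ (P.2 → y = []) ∧ conv x y = w}
  refine isRegular_of_leftQuotient_mem (S := insert 0 (Set.range V))
    ((Set.finite_range V).insert 0) (.inr ⟨(False, False), ?_⟩) ?_
  · ext w
    exact ⟨fun ⟨x, y, _, _, h⟩ ↦ ⟨(x, y), trivial, h.symm⟩,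
      fun ⟨p, _, h⟩ ↦ ⟨p.1, p.2, False.elim, False.elim, h.symm⟩⟩
  · rintro _ (rfl | ⟨⟨P, Q⟩, rfl⟩) ⟨a, b⟩
    · exact .inl rfl
    · have hmem : ∀ w, w ∈ (V (P, Q)).leftQuotient [(a, b)] ↔
          ∃ x y, (P → x = []) ∧ (Q → y = []) ∧ conv x y = (a, b) :: w := fun w ↦ Iff.rfl
      simp only [conv_eq_cons_iff] at hmem
      by_cases h : (a, b) ≠ (none, none) ∧ (P → a = none) ∧ (Q → b = none)
      · refine .inr ⟨(a = none, b = none), Language.ext fun w ↦ ?_⟩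
        rw [hmem]
        constructor
        · rintro ⟨x, y, hx, hy, rfl⟩
          refine ⟨a.toList ++ x, b.toList ++ y, ?_⟩
          cases a <;> cases b <;> simp_all
        · rintro ⟨x, y, -, -, -, hhead, rfl⟩
          obtain ⟨rfl, rfl⟩ := Prod.mk.inj hhead
          refine ⟨x.tail, y.tail, ?_, ?_, rfl⟩ <;> simp +contextual
      · refine .inl (Language.ext fun w ↦ ?_)
        rw [hmem]
        refine iff_of_false ?_ (Language.notMem_zero _)
        rintro ⟨x, y, hx, hy, hab, hhead, _⟩
        obtain ⟨rfl, rfl⟩ := Prod.mk.inj hhead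
        exact h ⟨hab, fun hP ↦ by rw [hx hP]; rfl, fun hQ ↦ by rw [hy hQ]; rfl⟩

lemma convLanguage_comp : convLanguage (R.comp S) =
    {w | (∃ t, (tracks (fun c ↦ (c.1, c.2.1)) t ∈ convLanguage R ∧
        tracks Prod.snd t ∈ convLanguage S) ∧ tracks (fun c ↦ (c.1, c.2.2)) t = w) ∧
      w ∈ convLanguage Set.univ} := by
  ext w
  constructor
  · rintro ⟨⟨x, z⟩, ⟨y, hxy, hyz⟩, rfl⟩
    refine ⟨?_, ⟨(x, z), trivial, rfl⟩⟩
    let n := max x.length (max y.length z.length)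
    have hx : x.length ≤ n := by simp [n]
    have hy : y.length ≤ n := by simp [n]
    have hz : z.length ≤ n := by simp [n]
    have htracks (f : Option α × Option α × Option α → Option α × Option α) :
        tracks f ((List.range n).map fun i ↦ (x[i]?, y[i]?, z[i]?)) =
          tracks (fun i ↦ f (x[i]?, y[i]?, z[i]?)) (List.range n) := by
      simp [tracks, Function.comp_def]
    refine ⟨(List.range n).map fun i ↦ (x[i]?, y[i]?, z[i]?), ⟨?_, ?_⟩, ?_⟩
    · rw [htracks, tracks_range_eq_conv hx hy]
      exact conv_mem_convLanguage.2 hxy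
    · rw [htracks, tracks_range_eq_conv hy hz]
      exact conv_mem_convLanguage.2 hyz
    · rw [htracks, tracks_range_eq_conv hx hz]
  · rintro ⟨⟨t, ⟨⟨⟨x, y⟩, hxy, h₁₂⟩, ⟨⟨y', z⟩, hyz, h₂₃⟩⟩, rfl⟩, ⟨⟨x', z'⟩, -, h₁₃⟩⟩
    obtain ⟨rfl, rfl⟩ := filterMap_of_tracks_eq_conv h₁₂
    obtain ⟨rfl, rfl⟩ := filterMap_of_tracks_eq_conv h₂₃
    obtain ⟨rfl, rfl⟩ := filterMap_of_tracks_eq_conv h₁₃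
    exact ⟨_, ⟨_, hxy, hyz⟩, h₁₃⟩

namespace IsRegularRel

lemma inv (hR : IsRegularRel R) : IsRegularRel R.inv := by
  have hswap : convLanguage R.inv = {w | w.map Prod.swap ∈ convLanguage R} := by
    ext w
    constructor
    · rintro ⟨p, hp, rfl⟩
      exact ⟨p.swap, hp, map_swap_conv _ _⟩
    · rintro ⟨p, hp, h⟩
      refine ⟨p.swap, hp, ?_⟩
      simpa [map_swap_conv] using congrArg (List.map Prod.swap) h
  change Language.IsRegular (convLanguage R.inv)
  rw [hswap]
  exact isRegular_preimage (fun _ _ ↦ List.map_append) hR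

lemma isRegular_cod (hR : IsRegularRel R) : Language.IsRegular (R.cod : Language α) := by
  have hcod : (R.cod : Language α) = {y | ∃ w ∈ convLanguage R, w.filterMap Prod.snd = y} := by
    ext y
    constructor
    · rintro ⟨x, hxy⟩
      exact ⟨conv x y, ⟨_, hxy, rfl⟩, filterMap_snd_conv x y⟩
    · rintro ⟨_, ⟨p, hp, rfl⟩, rfl⟩
      exact ⟨p.1, by rwa [filterMap_snd_conv]⟩
  rw [hcod]
  exact isRegular_filterMap hR _

lemma biUnion {ι : Type*} {s : Set ι} (hs : s.Finite) {R : ι → SetRel (List α) (List α)}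
    (hR : ∀ i ∈ s, IsRegularRel (R i)) : IsRegularRel {p | ∃ i ∈ s, p ∈ R i} := by
  have hunion : convLanguage {p | ∃ i ∈ s, p ∈ R i} = {w | ∃ i ∈ s, w ∈ convLanguage (R i)} := by
    ext w
    constructor
    · rintro ⟨p, ⟨i, hi, hp⟩, rfl⟩
      exact ⟨i, hi, p, hp, rfl⟩
    · rintro ⟨i, hi, p, hp, rfl⟩
      exact ⟨p, ⟨i, hi, hp⟩, rfl⟩
  change Language.IsRegular (convLanguage _)
  rw [hunion]
  exact isRegular_biUnion hs hR

lemma comp (hR : IsRegularRel R) (hS : IsRegularRel S) : IsRegularRel (R.comp S) := by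
  let T : Language (Option α × Option α × Option α) :=
    {t | tracks (fun c ↦ (c.1, c.2.1)) t ∈ convLanguage R ∧ tracks Prod.snd t ∈ convLanguage S}
  have hT : T.IsRegular := (isRegular_tracks_mem _ hR).inf (isRegular_tracks_mem _ hS)
  change Language.IsRegular (convLanguage _)
  rw [convLanguage_comp]
  exact (isRegular_tracks _ hT).inf isRegularRel_univ

end IsRegularRel

lemma isRegularRel_append {L : Language α} (hL : L.IsRegular) (u : List α) :
    IsRegularRel {p : List α × List α | p.1 ∈ L ∧ p.2 = p.1 ++ u} := by
  let D : Language (Option α × Option α) :=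
    {v | ∃ w ∈ L, w.filterMap (fun a ↦ some (some a, some a)) = v}
  have hD : D.IsRegular := isRegular_filterMap hL _
  have hconv (w : List α) :
      conv w (w ++ u) = w.filterMap (fun a ↦ some (some a, some a)) ++ conv [] u := by
    simpa using conv_append_append w [] u
  have hmul : convLanguage {p : List α × List α | p.1 ∈ L ∧ p.2 = p.1 ++ u} =
      D * {conv [] u} := by
    ext v
    constructor
    · rintro ⟨⟨w, y⟩, ⟨hw, hy⟩, rfl⟩
      obtain rfl : y = w ++ u := hy
      exact ⟨_, ⟨w, hw, rfl⟩, _, rfl, (hconv w).symm⟩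
    · rintro ⟨_, ⟨w, hw, rfl⟩, _, rfl, rfl⟩
      exact ⟨(w, w ++ u), ⟨hw, rfl⟩, (hconv w).symm⟩
  change Language.IsRegular (convLanguage _)
  rw [hmul]
  exact isRegular_mul hD (isRegular_of_finite (Set.finite_singleton _))

end Convolution

section RightMultiplication

variable {α G : Type*} [Group G] {L : Language α} {ψ : List α → G} {A : Set G} {g h : G}

/-- The relation `R_g = {(ψ⁻¹(x), ψ⁻¹(xg)) : x ∈ G}` on `L` given by right multiplication by an
arbitrary group element `g`, for a map `ψ` that represents the group by the words of `L`. -/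
def rightMulRel (L : Language α) (ψ : List α → G) (g : G) : SetRel (List α) (List α) :=
  {p | p.1 ∈ L ∧ p.2 ∈ L ∧ ψ p.2 = ψ p.1 * g}

lemma rightMulRel_one (hψ : Set.InjOn ψ L) :
    rightMulRel L ψ 1 = {p | p.1 ∈ L ∧ p.2 = p.1 ++ []} := by
  ext ⟨x, y⟩
  constructor
  · rintro ⟨hx, hy, hxy⟩
    exact ⟨hx, by simpa using hψ hy hx (by simpa using hxy)⟩
  · rintro ⟨hx, hxy⟩
    obtain rfl : y = x := by simpa using hxy
    exact ⟨hx, hx, (mul_one _).symm⟩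

lemma rightMulRel_inv : rightMulRel L ψ g⁻¹ = (rightMulRel L ψ g).inv := by
  ext ⟨x, y⟩
  exact ⟨fun ⟨hx, hy, h⟩ ↦ ⟨hy, hx, (eq_mul_inv_iff_mul_eq.1 h).symm⟩,
    fun ⟨hy, hx, h⟩ ↦ ⟨hx, hy, eq_mul_inv_iff_mul_eq.2 h.symm⟩⟩

lemma rightMulRel_mul (hψ : Set.SurjOn ψ L Set.univ) :
    rightMulRel L ψ (g * h) = (rightMulRel L ψ g).comp (rightMulRel L ψ h) := by
  ext ⟨x, z⟩
  constructor
  · rintro ⟨hx, hz, hxz⟩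
    obtain ⟨y, hy, hxy⟩ := hψ (Set.mem_univ (ψ x * g))
    exact ⟨y, ⟨hx, hy, hxy⟩, hy, hz, by rw [hxz, hxy, mul_assoc]⟩
  · rintro ⟨y, ⟨hx, -, hxy⟩, -, hz, hyz⟩
    exact ⟨hx, hz, by rw [hyz, hxy, mul_assoc]⟩

lemma isRegularRel_rightMulRel (hL : L.IsRegular) (hψ : Set.BijOn ψ L Set.univ)
    (hR : ∀ a ∈ A, IsRegularRel (rightMulRel L ψ a)) (hg : g ∈ Subgroup.closure A) :
    IsRegularRel (rightMulRel L ψ g) := by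
  induction hg using Subgroup.closure_induction with
  | mem a ha => exact hR a ha
  | one => rw [rightMulRel_one hψ.injOn]; exact isRegularRel_append hL []
  | mul g h _ _ hg hh => rw [rightMulRel_mul hψ.surjOn]; exact hg.comp hh
  | inv g _ hg => rw [rightMulRel_inv]; exact hg.inv

end RightMultiplication

section Defect

open scoped Pointwise

variable {α G : Type*} [Group G] {L : Language α} {π ψ : List α → G} {B : Set G}
  {p s u v w : List α} {a : α} {g h : G}

/-- A word of `Q` chosen once and for all, the empty word if possible (a junk value if `Q` is
empty). It turns a left quotient of a language into a way of completing prefixes. -/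
noncomputable def representative (Q : Language α) : List α :=
  Classical.epsilon fun w ↦ w ∈ Q ∧ ([] ∈ Q → w = [])

lemma representative_spec {Q : Language α} (hs : s ∈ Q) :
    representative Q ∈ Q ∧ ([] ∈ Q → representative Q = []) := by
  refine Classical.epsilon_spec (p := fun w ↦ w ∈ Q ∧ ([] ∈ Q → w = [])) ?_
  by_cases hnil : [] ∈ Q
  · exact ⟨[], hnil, fun _ ↦ rfl⟩
  · exact ⟨s, hs, fun h ↦ (hnil h).elim⟩

/-- The canonical extension of a prefix `p` of some word of `L` to a word of `L`; the suffix
appended depends only on the left quotient of `L` by `p`. -/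
noncomputable def completion (L : Language α) (p : List α) : List α :=
  p ++ representative (L.leftQuotient p)

lemma completion_mem (h : p ++ s ∈ L) : completion L p ∈ L :=
  (representative_spec (Q := L.leftQuotient p) h).1

lemma completion_eq_self (h : p ∈ L) : completion L p = p := by
  have hnil : [] ∈ L.leftQuotient p := by simpa using h
  rw [completion, (representative_spec hnil).2 hnil, List.append_nil]

lemma completion_pair_mem_iff {R : SetRel (List α) (List α)} :
    (completion L u, completion L (u ++ [a])) ∈ R ↔
      conv (representative (L.leftQuotient u))
          (a :: representative ((L.leftQuotient u).leftQuotient [a])) ∈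
        (convLanguage R).leftQuotient (u.map fun a ↦ (some a, some a)) := by
  rw [Language.mem_leftQuotient, ← conv_append_append, conv_mem_convLanguage, completion,
    completion, Language.leftQuotient_append, List.append_assoc, List.singleton_append]

/-- The defect `π(p)⁻¹ ψ(p')` of a prefix `p` of a word of `L`, where `p'` is the completion of `p`,
encoded as a subsingleton of `G` that is empty if `p` is not such a prefix. -/
def prefixDefect (L : Language α) (π ψ : List α → G) (p : List α) : Set G :=
  {g | completion L p ∈ L ∧ ψ (completion L p) = π p * g}

lemma mem_prefixDefect_of_mem (hw : w ∈ L) : g ∈ prefixDefect L π ψ w ↔ (π w)⁻¹ * ψ w = g := by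
  rw [prefixDefect, Set.mem_ofPred_eq, completion_eq_self hw, inv_mul_eq_iff_eq_mul]
  exact and_iff_right hw

lemma prefixDefect_subset (hπ : ∀ u v, π (u ++ v) = π u * π v)
    (hdefect : ∀ w ∈ L, (π w)⁻¹ * ψ w ∈ B) (p : List α) :
    prefixDefect L π ψ p ⊆ (π ∘ representative) '' Set.range L.leftQuotient * B := by
  rintro g ⟨hp, hg⟩
  refine ⟨_, ⟨_, ⟨p, rfl⟩, rfl⟩, _, hdefect _ hp, ?_⟩
  change π (representative _) * ((π (completion L p))⁻¹ * ψ (completion L p)) = g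
  rw [hg, completion, hπ]
  group

lemma mem_prefixDefect_append (hπ : ∀ u v, π (u ++ v) = π u * π v) :
    h ∈ prefixDefect L π ψ (u ++ [a]) ↔ ∃ g ∈ prefixDefect L π ψ u,
      (completion L u, completion L (u ++ [a])) ∈ rightMulRel L ψ (g⁻¹ * π [a] * h) := by
  constructor
  · rintro ⟨hua, hh⟩
    have hu : completion L u ∈ L := by
      rw [completion, List.append_assoc] at hua
      exact completion_mem hua
    refine ⟨(π u)⁻¹ * ψ (completion L u), ⟨hu, (mul_inv_cancel_left _ _).symm⟩, hu, hua, ?_⟩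
    rw [hh, hπ]
    group
  · rintro ⟨g, ⟨-, hg⟩, -, hua, hmul⟩
    refine ⟨hua, ?_⟩
    change ψ (completion L (u ++ [a])) = ψ (completion L u) * _ at hmul
    rw [hmul, hg, hπ]
    group

lemma prefixDefect_append_subset (hπ : ∀ u v, π (u ++ v) = π u * π v)
    (hquotient : L.leftQuotient u = L.leftQuotient v)
    (hdefect : prefixDefect L π ψ u = prefixDefect L π ψ v)
    (hrel : ∀ g ∈ prefixDefect L π ψ u, ∀ h ∈ prefixDefect L π ψ (u ++ [a]),
      (convLanguage (rightMulRel L ψ (g⁻¹ * π [a] * h))).leftQuotient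
          (u.map fun a ↦ (some a, some a)) =
        (convLanguage (rightMulRel L ψ (g⁻¹ * π [a] * h))).leftQuotient
          (v.map fun a ↦ (some a, some a))) :
    prefixDefect L π ψ (u ++ [a]) ⊆ prefixDefect L π ψ (v ++ [a]) := by
  intro h hh
  obtain ⟨g, hg, hgh⟩ := (mem_prefixDefect_append hπ).1 hh
  refine (mem_prefixDefect_append hπ).2 ⟨g, hdefect ▸ hg, ?_⟩
  rwa [completion_pair_mem_iff, hrel g hg h hh, hquotient, ← completion_pair_mem_iff] at hgh

/-
The left quotient of `L` by a prefix `u`, those of the languages of the relations `R_k` by the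
diagonal word over `u`, and the defect of `u` together form a finite state that is updated letter by
letter.
-/
lemma isRegular_defect_eq [Finite α] (hL : L.IsRegular) (hπ : ∀ u v, π (u ++ v) = π u * π v)
    (hR : ∀ g, IsRegularRel (rightMulRel L ψ g)) (hB : B.Finite)
    (hdefect : ∀ w ∈ L, (π w)⁻¹ * ψ w ∈ B) (b : G) :
    Language.IsRegular ({w | w ∈ L ∧ (π w)⁻¹ * ψ w = b} : Language α) := by
  let V : Set G := (π ∘ representative) '' Set.range L.leftQuotient * B
  let Γ : Set G := V⁻¹ * Set.range (fun a ↦ π [a]) * V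
  let quotients (u : List α) (k : Γ) : Language (Option α × Option α) :=
    (convLanguage (rightMulRel L ψ k)).leftQuotient (u.map fun a ↦ (some a, some a))
  let F (u : List α) := (L.leftQuotient u, quotients u, prefixDefect L π ψ u)
  have hV : V.Finite := (hL.finite_range_leftQuotient.image _).mul hB
  have hΓ : Γ.Finite := (hV.inv.mul (Set.finite_range _)).mul hV
  have hdefect_subset (u : List α) : prefixDefect L π ψ u ⊆ V := prefixDefect_subset hπ hdefect u
  have hF : (Set.range F).Finite := by
    have : Finite Γ := hΓ
    have hquotients := Set.Finite.pi' fun k : Γ ↦ (hR k).finite_range_leftQuotient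
    refine (hL.finite_range_leftQuotient.prod (hquotients.prod hV.powerset)).subset ?_
    rintro _ ⟨u, rfl⟩
    exact ⟨⟨u, rfl⟩, fun k ↦ ⟨_, rfl⟩, hdefect_subset u⟩
  have hsubset (u v : List α) (a : α) (h : F u = F v) :
      prefixDefect L π ψ (u ++ [a]) ⊆ prefixDefect L π ψ (v ++ [a]) := by
    obtain ⟨hu, hquotients, hdef⟩ := (by simpa only [F, Prod.mk.injEq] using h)
    refine prefixDefect_append_subset hπ hu hdef fun g hg h hh ↦ congrFun hquotients ⟨_, ?_⟩
    exact Set.mul_mem_mul (Set.mul_mem_mul (Set.inv_mem_inv.2 (hdefect_subset u hg)) ⟨a, rfl⟩)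
      (hdefect_subset _ hh)
  refine isRegular_of_rightInvariant hF (fun u v a h ↦ ?_) fun u v h ⟨hu, hub⟩ ↦ ?_
  · have hdef := (hsubset u v a h).antisymm (hsubset v u a h.symm)
    simp only [F, quotients, Prod.mk.injEq, funext_iff] at h
    simp only [F, quotients, hdef, List.map_append, Language.leftQuotient_append, h.1, h.2.1]
  · simp only [F, Prod.mk.injEq] at h
    have hv : v ∈ L := by
      rwa [← List.append_nil v, ← Language.mem_leftQuotient, ← h.1, Language.mem_leftQuotient,
        List.append_nil]
    exact ⟨hv, by rwa [← mem_prefixDefect_of_mem hv, ← h.2.2, mem_prefixDefect_of_mem hu]⟩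

end Defect

section Automatic

variable {G : Type*} [Group G] {A B : Set G} {L : Language (Alph A)} {ψ : List (Alph A) → G}
  {d : FFun}

lemma eval_append (u v : List (Alph A)) : eval A (u ++ v) = eval A u * eval A v :=
  (congrArg List.prod List.map_append).trans List.prod_append

lemma exists_eval_eq (hA : Subgroup.closure A = ⊤) (g : G) : ∃ w : List (Alph A), eval A w = g := by
  have hg : g ∈ Submonoid.closure (A ∪ A⁻¹) := by
    rw [← Subgroup.closure_toSubmonoid, hA]
    exact Subgroup.mem_top g
  obtain ⟨l, hl, rfl⟩ := Submonoid.exists_list_of_mem_closure hg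
  lift l to List {x : G // x ∈ A ∪ A⁻¹} using hl
  exact ⟨l, rfl⟩

lemma finite_alph (hfin : A.Finite) : Finite (Alph A) :=
  (hfin.union hfin.inv).to_subtype

lemma finite_setOf_wordLength_le (hfin : A.Finite) (hA : Subgroup.closure A = ⊤) (n : ℕ) :
    {g | wordLength A g ≤ n}.Finite := by
  have := finite_alph hfin
  refine ((List.finite_length_le (Alph A) n).image (eval A)).subset fun g hg ↦ ?_
  obtain ⟨w, hw⟩ := exists_eval_eq hA g
  obtain ⟨v, hv, hlength⟩ := Nat.sInf_mem
    (⟨_, w, hw, rfl⟩ : {n | ∃ w : List (Alph A), eval A w = g ∧ w.length = n}.Nonempty)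
  exact ⟨v, hlength.trans_le hg, hv⟩

lemma wordLength_one : wordLength A 1 = 0 :=
  Nat.le_zero.1 (Nat.sInf_le ⟨[], rfl, rfl⟩)

lemma IsCayleyAutomaticRep.image (h : IsCayleyAutomaticRep A L ψ)
    {δ : List (Alph A) → List (Alph A)} (hδ : IsRegularRel {p | p.1 ∈ L ∧ p.2 = δ p.1})
    {φ : List (Alph A) → G} (hφ : ∀ w ∈ L, φ (δ w) = ψ w) :
    IsCayleyAutomaticRep A {v | ∃ w ∈ L, v = δ w} φ := by
  obtain ⟨-, hψ, hR⟩ := h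
  refine ⟨hδ.isRegular_cod, ⟨fun _ _ ↦ trivial, ?_, fun g _ ↦ ?_⟩, fun a ha ↦ ?_⟩
  · rintro _ ⟨w, hw, rfl⟩ _ ⟨w', hw', rfl⟩ hww'
    rw [hφ w hw, hφ w' hw'] at hww'
    rw [hψ.injOn hw hw' hww']
  · obtain ⟨w, hw, rfl⟩ := hψ.surjOn (Set.mem_univ g)
    exact ⟨δ w, ⟨w, hw, rfl⟩, hφ w hw⟩
  · convert (hδ.inv.comp (hR a ha)).comp hδ using 1
    ext ⟨x, y⟩
    constructor
    · rintro ⟨⟨w, hw, hx⟩, ⟨w', hw', hy⟩, hxy⟩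
      obtain rfl : x = δ w := hx
      obtain rfl : y = δ w' := hy
      exact ⟨w', ⟨w, ⟨hw, rfl⟩, hw, hw', by rwa [hφ w hw, hφ w' hw'] at hxy⟩, hw', rfl⟩
    · rintro ⟨w', ⟨w, ⟨hw, hx⟩, -, -, hww'⟩, hw', hy⟩
      obtain rfl : x = δ w := hx
      obtain rfl : y = δ w' := hy
      exact ⟨⟨w, hw, rfl⟩, ⟨w', hw', rfl⟩, by rwa [hφ w hw, hφ w' hw']⟩

lemma isAutomatic_of_finite_defect (hfin : A.Finite) (hA : Subgroup.closure A = ⊤)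
    (h : IsCayleyAutomaticRep A L ψ) (hB : B.Finite)
    (hdefect : ∀ w ∈ L, (eval A w)⁻¹ * ψ w ∈ B) : IsAutomatic A := by
  have := finite_alph hfin
  have hR (g : G) : IsRegularRel (rightMulRel L ψ g) :=
    isRegularRel_rightMulRel h.1 h.2.1 h.2.2 (hA ▸ Subgroup.mem_top g)
  have hL (b : G) := isRegular_defect_eq h.1 eval_append hR hB hdefect b
  choose r hr using exists_eval_eq hA
  let δ (w : List (Alph A)) : List (Alph A) := w ++ r ((eval A w)⁻¹ * ψ w)
  have hδ : IsRegularRel {p : List (Alph A) × List (Alph A) | p.1 ∈ L ∧ p.2 = δ p.1} := by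
    convert IsRegularRel.biUnion hB fun b _ ↦ isRegularRel_append (hL b) (r b) using 1
    ext ⟨x, y⟩
    constructor
    · rintro ⟨hx, hy⟩
      exact ⟨_, hdefect x hx, ⟨hx, rfl⟩, hy⟩
    · rintro ⟨b, hb, ⟨hx, rfl⟩, hy⟩
      exact ⟨hx, hy⟩
  exact ⟨_, h.image hδ fun w _ ↦ by rw [eval_append, hr, mul_inv_cancel_left]⟩

lemma InB.isAutomatic (hfin : A.Finite) (hA : Subgroup.closure A = ⊤)
    (hd : ∃ C : ℝ, ∀ n, d.Q ≤ n → d.toFun n ≤ C) (h : InB A d) : IsAutomatic A := by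
  obtain ⟨C, hC⟩ := hd
  obtain ⟨L, ψ, hrep, K, M, N, -, hM, -, hN, hdist⟩ := h
  refine isAutomatic_of_finite_defect hfin hA hrep
    (finite_setOf_wordLength_le hfin hA ⌊K * C⌋₊) fun w hw ↦ Nat.le_floor ?_
  let n := max N w.length
  have hn : d.Q ≤ M * n := calc
    d.Q ≤ N := hN
    _ ≤ n := le_max_left _ _
    _ ≤ M * n := Nat.le_mul_of_pos_left _ hM
  calc (cayleyDist A (eval A w) (ψ w) : ℝ)
    _ ≤ K * d.toFun (M * n) := hdist n (le_max_left _ _) w hw (le_max_right _ _)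
    _ ≤ K * C := by gcongr; exact hC _ hn

lemma IsAutomatic.inB (h : IsAutomatic A) (d : FFun) : InB A d := by
  obtain ⟨L, hL⟩ := h
  refine ⟨L, eval A, hL, 1, 1, d.Q + 1, one_pos, one_pos, d.Q.succ_pos, d.Q.le_succ,
    fun n hn w _ _ ↦ ?_⟩
  rw [cayleyDist, inv_mul_cancel, wordLength_one, Nat.cast_zero, Nat.cast_one, one_mul, one_mul]
  exact d.nonneg n (Nat.le_of_succ_le hn)

end Automatic

end CAG

open CAG in
/-- If `d ∈ 𝔉` is bounded, then `ℬ_d` equals the class of automatic groups; in particular,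
if for some `f ∈ 𝔉` the class `ℬ_f` contains a non-automatic group, then `f` is unbounded. -/
theorem classB_bounded_eq_automatic
    (d : FFun) (hd : ∃ C : ℝ, ∀ n, d.Q ≤ n → d.toFun n ≤ C) :
    (∀ (G : Type) (_ : Group G) (A : Set G), A.Finite → Subgroup.closure A = ⊤ →
        (InB A d ↔ IsAutomatic A)) ∧
    (∀ (f : FFun) (G : Type) (_ : Group G) (A : Set G), A.Finite → Subgroup.closure A = ⊤ →
        InB A f → ¬ IsAutomatic A → ¬ ∃ C : ℝ, ∀ n, f.Q ≤ n → f.toFun n ≤ C) := by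
  refine ⟨fun G _ A hfin hA ↦ ⟨fun h ↦ h.isAutomatic hfin hA hd, fun h ↦ h.inB d⟩, ?_⟩
  intro f G _ A hfin hA hB hnot hf
  exact hnot (hB.isAutomatic hfin hA hf)
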